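/- Assume B is bounded below on the closure of R(D) and that D kernel/range decomposes. If BD kernel/range decomposes, then DB kernel/range decomposes, i.e. X = N(DB) ⊕ closure(R(DB)) as a topological direct sum. -/

import Mathlib

noncomputable section

variable {X : Type*} [NormedAddCommGroup X] [NormedSpace ℂ X]

/-- A complex normed space is reflexive if the canonical inclusion into its double dual is
surjective. -/
def ReflexiveSpace (X : Type*) [NormedAddCommGroup X] [NormedSpace ℂ X] : Prop :=
  Function.Surjective (NormedSpace.inclusionInDoubleDual ℂ X)

/-- The open bisector `S_ω = {z ≠ 0 : |arg z| < ω or |arg (-z)| < ω}`. -/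
def Sector (ω : ℝ) : Set ℂ :=
  {z | z ≠ 0 ∧ (|Complex.arg z| < ω ∨ |Complex.arg (-z)| < ω)}

/-- The kernel of a partially defined operator, viewed as a subspace of the ambient space. -/
def pker (A : X →ₗ.[ℂ] X) : Submodule ℂ X :=
  (LinearMap.ker A.toFun).map A.domain.subtype

/-- The range of a partially defined operator. -/
def pran (A : X →ₗ.[ℂ] X) : Submodule ℂ X :=
  LinearMap.range A.toFun

/-- `X = N ⊕ M` as a topological direct sum: `N` and `M` are closed complementary subspaces. -/
def IsTopDirectSum (N M : Submodule ℂ X) : Prop :=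
  IsClosed (N : Set X) ∧ IsClosed (M : Set X) ∧ N ⊓ M = ⊥ ∧ N ⊔ M = ⊤

/-- `A` kernel/range decomposes: `X = N(A) ⊕ closure (R(A))` as a topological direct sum. -/
def KerRanDecomp (A : X →ₗ.[ℂ] X) : Prop :=
  IsTopDirectSum (pker A) (pran A).topologicalClosure

/-- A closed operator `A` is bisectorial of angle `ω` if for every `ω' ∈ (ω, π/2)` there is
`C > 0` such that for every `λ ∉ S_{ω'}` the map `I + λA : D(A) → X` is a bijection whose
inverse is bounded with norm at most `C`. -/
def IsBisectorial (A : X →ₗ.[ℂ] X) (ω : ℝ) : Prop :=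
  A.IsClosed ∧
    ∀ ω' ∈ Set.Ioo ω (Real.pi / 2), ∃ C > 0, ∀ lam : ℂ, lam ∉ Sector ω' →
      Function.Bijective (fun u : A.domain => (u : X) + lam • A u) ∧
        ∀ u : A.domain, ‖(u : X)‖ ≤ C * ‖(u : X) + lam • A u‖

/-- The operator `BD`, with domain `D(D)`, acting by `u ↦ B (D u)`. -/
def opBD (B : X →L[ℂ] X) (D : X →ₗ.[ℂ] X) : X →ₗ.[ℂ] X :=
  ⟨D.domain, (B : X →ₗ[ℂ] X).comp D.toFun⟩

/-- The operator `DB`, with domain `{u : B u ∈ D(D)}`, acting by `u ↦ D (B u)`. -/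
def opDB (B : X →L[ℂ] X) (D : X →ₗ.[ℂ] X) : X →ₗ.[ℂ] X :=
  ⟨D.domain.comap (B : X →ₗ[ℂ] X),
    D.toFun.comp ((B : X →ₗ[ℂ] X).restrict fun _ hx => hx)⟩

/-- `B` is bounded below on the set `S`. -/
def BoundedBelowOn (B : X →L[ℂ] X) (S : Set X) : Prop :=
  ∃ c > 0, ∀ u ∈ S, c * ‖u‖ ≤ ‖B u‖

theorem mem_pker_aux {X : Type*} [NormedAddCommGroup X] [NormedSpace ℂ X] (A : X →ₗ.[ℂ] X) (x : X) :
    x ∈ pker A ↔ ∃ h : x ∈ A.domain, A.toFun ⟨x, h⟩ = 0 := by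
  unfold pker
  constructor
  · rintro ⟨y, hy, rfl⟩
    exact ⟨y.2, hy⟩
  · rintro ⟨h, h0⟩
    exact ⟨⟨x, h⟩, h0, rfl⟩

/-- If `B` is bounded below on the closure of `R(D)`, `D` kernel/range
decomposes and `BD` kernel/range decomposes, then `DB` kernel/range decomposes:
`X = N(DB) ⊕ closure (R(DB))` as a topological direct sum. -/
theorem stmt_13 {X : Type*} [NormedAddCommGroup X] [NormedSpace ℂ X] [CompleteSpace X]
    (hrefl : ReflexiveSpace X) (D : X →ₗ.[ℂ] X) (hD : D.IsClosed)
    (hdense : Dense (D.domain : Set X)) (B : X →L[ℂ] X)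
    (hlow : BoundedBelowOn B ((pran D).topologicalClosure : Set X))
    (hD' : KerRanDecomp D) (hBD : KerRanDecomp (opBD B D)) :
    KerRanDecomp (opDB B D) := by
  obtain ⟨c, hc, hlow⟩ := hlow
  obtain ⟨hN, -, -, -⟩ := hD'
  obtain ⟨-, -, hinf, hsup⟩ := hBD
  have hinj : ∀ u ∈ (pran D).topologicalClosure, B u = 0 → u = 0 := by
    intro u hu h0
    have h := hlow u hu
    rw [h0, norm_zero] at h
    have h2 : ‖u‖ ≤ 0 := by
      by_contra h3
      have := mul_pos hc (not_le.mp h3)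
      linarith
    exact norm_le_zero_iff.mp h2
  have hker : pker (opBD B D) = pker D := by
    ext x
    rw [mem_pker_aux, mem_pker_aux]
    constructor
    · rintro ⟨h, h0⟩
      exact ⟨h, hinj _ (Submodule.le_topologicalClosure _ ⟨⟨x, h⟩, rfl⟩) h0⟩
    · rintro ⟨h, h0⟩
      refine ⟨h, ?_⟩
      change B (D.toFun ⟨x, h⟩) = 0
      rw [h0, map_zero]
  have hran : (pran (opBD B D)).topologicalClosure =
      (pran D).topologicalClosure.map (B : X →ₗ[ℂ] X) := by
    apply le_antisymm
    · apply Submodule.topologicalClosure_minimal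
      · rintro _ ⟨u, rfl⟩
        exact ⟨D.toFun u, Submodule.le_topologicalClosure _ ⟨u, rfl⟩, rfl⟩
      · have hcl : IsClosed (((pran D).topologicalClosure : Submodule ℂ X) : Set X) :=
          Submodule.isClosed_topologicalClosure _
        have : CompleteSpace (pran D).topologicalClosure := hcl.completeSpace_coe
        let f : (pran D).topologicalClosure →L[ℂ] X :=
          B.comp (pran D).topologicalClosure.subtypeL
        have hf : AntilipschitzWith (Real.toNNReal c⁻¹) f := by
          apply AddMonoidHomClass.antilipschitz_of_bound f
          intro x
          rw [Real.coe_toNNReal _ (inv_pos.mpr hc).le, inv_mul_eq_div, le_div_iff₀ hc, mul_comm]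
          exact hlow x x.2
        have h := hf.isClosed_range f.uniformContinuous
        convert h using 1
        ext y
        simp [f]
        rfl
    · rintro _ ⟨u, hu, rfl⟩
      have hm : Set.MapsTo B (pran D : Set X) (pran (opBD B D) : Set X) := by
        rintro _ ⟨v, rfl⟩
        exact ⟨v, rfl⟩
      exact hm.closure B.continuous hu
  rw [hker, hran] at hinf hsup
  have hdec : ∀ x : X, ∃ n ∈ pker D, ∃ r ∈ (pran D).topologicalClosure, n + B r = x := by
    intro x
    have hx : x ∈ pker D ⊔ (pran D).topologicalClosure.map (B : X →ₗ[ℂ] X) := by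
      rw [hsup]; trivial
    obtain ⟨n, hn, _, ⟨r, hr, rfl⟩, h⟩ := Submodule.mem_sup.mp hx
    exact ⟨n, hn, r, hr, h⟩
  have hkerDB : pker (opDB B D) = (pker D).comap (B : X →ₗ[ℂ] X) := by
    ext x
    rw [Submodule.mem_comap, mem_pker_aux, mem_pker_aux]
    rfl
  have hranDB : pran (opDB B D) = pran D := by
    apply le_antisymm
    · rintro _ ⟨u, rfl⟩
      exact ⟨⟨B u, u.2⟩, rfl⟩
    · rintro _ ⟨u, rfl⟩
      obtain ⟨n, hn, r, -, h⟩ := hdec u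
      obtain ⟨hnd, hn0⟩ := (mem_pker_aux D n).mp hn
      have hBr : B r = u - n := by rw [← h]; abel
      have hrd : B r ∈ D.domain := by rw [hBr]; exact sub_mem u.2 hnd
      refine ⟨⟨r, hrd⟩, ?_⟩
      change D.toFun ⟨B r, hrd⟩ = D.toFun u
      have : (⟨B r, hrd⟩ : D.domain) = u - ⟨n, hnd⟩ := Subtype.ext hBr
      rw [this, map_sub, hn0, sub_zero]
  unfold KerRanDecomp
  rw [hkerDB, hranDB]
  refine ⟨hN.preimage B.continuous, Submodule.isClosed_topologicalClosure _, ?_, ?_⟩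
  · rw [eq_bot_iff]
    rintro r ⟨h1, h2⟩
    have h3 : B r ∈ pker D ⊓ (pran D).topologicalClosure.map (B : X →ₗ[ℂ] X) :=
      ⟨h1, r, h2, rfl⟩
    rw [hinf] at h3
    exact hinj r h2 h3
  · rw [eq_top_iff]
    rintro x -
    obtain ⟨n, hn, r, hr, h⟩ := hdec (B x)
    refine Submodule.mem_sup.mpr ⟨x - r, ?_, r, hr, sub_add_cancel x r⟩
    change B (x - r) ∈ pker D
    rw [map_sub, ← h, add_sub_cancel_right]
    exact hn
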